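/- arXiv:1401.6260 — 2 statements merged into one kernel-verified Lean document; each statement's English description precedes it below -/
import Mathlib

section
/- Let s_1, …, s_M (M ≥ 2) be binary sequences of common period L such that every subfamily of M−1 of them is SI (i.e., for every A ⊆ {1,…,M} with |A| ≤ M−1 nonempty, H((τ_i)_{i∈A}; A) is independent of the shifts). Then for any two systems of shifts τ = (τ_1,…,τ_M) and τ′ = (τ′_1,…,τ′_M) and every i with 1 ≤ i ≤ M−1, δ_i(τ→τ′) = (−1)^{M−i} · binom(M, i) · δ_M(τ→τ′), where δ_m(τ→τ′) = θ_m(τ′_1,…,τ′_M) − θ_m(τ_1,…,τ_M). -/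
open Finset

/-- Generalized Hamming cross-correlation of the sequences indexed by `A`. -/
def Hcorr {M L : ℕ} [NeZero L] (s : Fin M → ZMod L → ℕ)
    (A : Finset (Fin M)) (τ : Fin M → ZMod L) : ℕ :=
  ∑ t : ZMod L, ∏ i ∈ A, s i (t + τ i)

/-- `theta s m τ` counts the `t ∈ ZMod L` such that exactly `m` of the values
`s 1 (t + τ 1), …, s M (t + τ M)` equal `1`. -/
def theta {M L : ℕ} [NeZero L] (s : Fin M → ZMod L → ℕ)
    (m : ℕ) (τ : Fin M → ZMod L) : ℕ :=
  (Finset.univ.filter (fun t : ZMod L =>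
    (Finset.univ.filter (fun i : Fin M => s i (t + τ i) = 1)).card = m)).card

lemma genfun_coeff {M L : ℕ} [NeZero L] (s : Fin M → ZMod L → ℕ) (τ : Fin M → ZMod L) (m : ℕ) :
    (∑ t : ZMod L, (Polynomial.X : Polynomial ℤ) ^
      (Finset.univ.filter (fun i : Fin M => s i (t + τ i) = 1)).card).coeff m
      = (theta s m τ : ℤ) := by
  rw [Polynomial.finsetSum_coeff]
  simp only [Polynomial.coeff_X_pow]
  rw [theta, Finset.card_filter]
  push_cast
  exact Finset.sum_congr rfl fun t _ => by simp only [eq_comm]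

lemma genfun_eq {M L : ℕ} [NeZero L] (s : Fin M → ZMod L → ℕ)
    (hbin : ∀ i t, s i t = 0 ∨ s i t = 1) (τ : Fin M → ZMod L) :
    (∑ t : ZMod L, (Polynomial.X : Polynomial ℤ) ^
      (Finset.univ.filter (fun i : Fin M => s i (t + τ i) = 1)).card)
      = ∑ A : Finset (Fin M),
        (Hcorr s A τ : Polynomial ℤ) * (Polynomial.X - Polynomial.C 1) ^ A.card := by
  have h1 : ∀ t : ZMod L, (Polynomial.X : Polynomial ℤ) ^
      (Finset.univ.filter (fun i : Fin M => s i (t + τ i) = 1)).card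
      = ∑ A : Finset (Fin M), (∏ i ∈ A, (s i (t + τ i) : Polynomial ℤ)) *
          (Polynomial.X - Polynomial.C 1) ^ A.card := by
    intro t
    have h2 : (Polynomial.X : Polynomial ℤ) ^
        (Finset.univ.filter (fun i : Fin M => s i (t + τ i) = 1)).card
        = ∏ i : Fin M, (1 + (s i (t + τ i) : Polynomial ℤ) *
          (Polynomial.X - Polynomial.C 1)) := by
      rw [← Finset.prod_const, Finset.prod_filter]
      refine Finset.prod_congr rfl fun i _ => ?_
      rcases hbin i (t + τ i) with h | h <;> simp [h]
    rw [h2, Finset.prod_one_add, Finset.powerset_univ]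
    refine Finset.sum_congr rfl fun A _ => ?_
    rw [Finset.prod_mul_distrib, Finset.prod_const]
  rw [Finset.sum_congr rfl fun t _ => h1 t, Finset.sum_comm]
  refine Finset.sum_congr rfl fun A _ => ?_
  rw [← Finset.sum_mul, Hcorr]
  push_cast
  rfl

theorem stmt10 (M L : ℕ) (hM : 2 ≤ M) (hL : 1 ≤ L) [NeZero L]
    (s : Fin M → ZMod L → ℕ) (hbin : ∀ i t, s i t = 0 ∨ s i t = 1)
    (hsub : ∀ A : Finset (Fin M), A.Nonempty → A.card ≤ M - 1 →
      ∀ τ τ' : Fin M → ZMod L, Hcorr s A τ = Hcorr s A τ') :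
    ∀ (τ τ' : Fin M → ZMod L) (i : ℕ), 1 ≤ i → i ≤ M - 1 →
      ((theta s i τ' : ℤ) - (theta s i τ : ℤ))
        = (-1) ^ (M - i) * (Nat.choose M i : ℤ) *
            ((theta s M τ' : ℤ) - (theta s M τ : ℤ)) := by
  intro τ τ' i _ hi
  have key : ∀ m : ℕ, ((theta s m τ' : ℤ) - (theta s m τ : ℤ))
      = ((Hcorr s univ τ' : ℤ) - (Hcorr s univ τ : ℤ)) * ((-1) ^ (M - m) * (M.choose m : ℤ)) := by
    intro m
    rw [← genfun_coeff s τ' m, ← genfun_coeff s τ m, ← Polynomial.coeff_sub,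
      genfun_eq s hbin, genfun_eq s hbin, ← Finset.sum_sub_distrib,
      Finset.sum_eq_single (univ : Finset (Fin M))]
    · rw [← sub_mul, Finset.card_univ, Fintype.card_fin, ← Polynomial.coeff_X_add_C_pow,
        ← Polynomial.coeff_C_mul]
      simp [sub_eq_add_neg]
    · intro A _ hA
      rcases A.eq_empty_or_nonempty with rfl | hne
      · simp [Hcorr]
      · have hc : A.card < M := by
          have h3 := Finset.card_lt_card (Finset.ssubset_univ_iff.mpr hA)
          simpa using h3
        rw [hsub A hne (by omega) τ' τ, sub_self]
    · simp
  rw [key i, key M]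
  simp
  ring
end

section
/- Let s_1, …, s_M (M ≥ 2) be binary sequences of common period L such that every subfamily of M−1 of them is SI (i.e., for every A ⊆ {1,…,M} with |A| ≤ M−1 nonempty, H((τ_i)_{i∈A}; A) is independent of the shifts). Then for any two systems of shifts τ = (τ_1,…,τ_M) and τ′ = (τ′_1,…,τ′_M) and every j with 1 ≤ j ≤ M−1, Σ_{i=j}^{M} binom(i, j) · δ_i(τ→τ′) = 0, where δ_i(τ→τ′) = θ_i(τ′_1,…,τ′_M) − θ_i(τ_1,…,τ_M). -/
open Finset

theorem sum_choose_theta {M L : ℕ} [NeZero L]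
    (s : Fin M → ZMod L → ℕ) (hbin : ∀ i t, s i t = 0 ∨ s i t = 1)
    (τ : Fin M → ZMod L) (j : ℕ) :
    ∑ i ∈ Finset.Icc j M, Nat.choose i j * theta s i τ =
      ∑ A ∈ Finset.powersetCard j (Finset.univ : Finset (Fin M)), Hcorr s A τ := by
  have hprod : ∀ (t : ZMod L) (A : Finset (Fin M)), ∏ i ∈ A, s i (t + τ i) =
      if A ⊆ Finset.univ.filter (fun i : Fin M => s i (t + τ i) = 1) then 1 else 0 := by
    intro t A
    split_ifs with h
    · refine Finset.prod_eq_one fun i hi => ?_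
      simpa using h hi
    · rw [Finset.not_subset] at h
      obtain ⟨i, hi, hn⟩ := h
      refine Finset.prod_eq_zero hi ?_
      rcases hbin i (t + τ i) with h0 | h1
      · exact h0
      · exact absurd (by simpa using h1) hn
  unfold Hcorr theta
  rw [Finset.sum_comm]
  have hR : ∀ t : ZMod L, ∑ A ∈ Finset.powersetCard j (Finset.univ : Finset (Fin M)),
      ∏ i ∈ A, s i (t + τ i) =
      Nat.choose (Finset.univ.filter (fun i : Fin M => s i (t + τ i) = 1)).card j := by
    intro t
    simp_rw [hprod]
    rw [← Finset.card_filter, ← Finset.card_powersetCard]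
    congr 1
    ext A
    simp only [Finset.mem_filter, Finset.mem_powersetCard, Finset.subset_univ, true_and]
    exact and_comm
  simp_rw [hR, Finset.card_filter _ (Finset.univ : Finset (ZMod L)), Finset.mul_sum]
  rw [Finset.sum_comm]
  refine Finset.sum_congr rfl fun t _ => ?_
  simp only [mul_ite, mul_one, mul_zero]
  rw [Finset.sum_ite_eq]
  split_ifs with h
  · rfl
  · symm
    apply Nat.choose_eq_zero_of_lt
    have := Finset.card_le_univ (Finset.univ.filter (fun i : Fin M => s i (t + τ i) = 1))
    rw [Fintype.card_fin] at this
    rw [Finset.mem_Icc] at h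
    omega

theorem stmt11 (M L : ℕ) (hM : 2 ≤ M) (hL : 1 ≤ L) [NeZero L]
    (s : Fin M → ZMod L → ℕ) (hbin : ∀ i t, s i t = 0 ∨ s i t = 1)
    (hsub : ∀ A : Finset (Fin M), A.Nonempty → A.card ≤ M - 1 →
      ∀ τ τ' : Fin M → ZMod L, Hcorr s A τ = Hcorr s A τ') :
    ∀ (τ τ' : Fin M → ZMod L) (j : ℕ), 1 ≤ j → j ≤ M - 1 →
      ∑ i ∈ Finset.Icc j M,
        (Nat.choose i j : ℤ) * ((theta s i τ' : ℤ) - (theta s i τ : ℤ)) = 0 := by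
  intro τ τ' j hj hjM
  have h : ∑ i ∈ Finset.Icc j M, Nat.choose i j * theta s i τ' =
      ∑ i ∈ Finset.Icc j M, Nat.choose i j * theta s i τ := by
    rw [sum_choose_theta s hbin, sum_choose_theta s hbin]
    refine Finset.sum_congr rfl fun A hA => ?_
    have hc := (Finset.mem_powersetCard.1 hA).2
    exact hsub A (Finset.card_pos.1 (by omega)) (by omega) _ _
  simp_rw [mul_sub]
  rw [Finset.sum_sub_distrib, sub_eq_zero]
  exact_mod_cast h
end
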